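/- Let 𝒰 be a probability distribution on the unit sphere of ℝ^n and ν a probability distribution on ℝ whose first D moments are finite. Define the null distribution 𝒬 under which Ỹ ∈ ℝ^{N×n} has i.i.d. rows ỹ_i ∼ N(0, I_n), and the planted distribution 𝒫 under which one first draws u ∼ 𝒰 and i.i.d. x_1,…,x_N ∼ ν, and then, conditionally, draws independent rows ỹ_i ∼ N(x_i·u, I_n − uuᵀ). Define Adv_{≤D} := sup over nonzero real polynomials f of degree at most D in the Nn entries of Ỹ of 𝔼_𝒫[f(Ỹ)] / √(𝔼_𝒬[f(Ỹ)²]). Then Adv_{≤D}² = Σ_{d=0}^{D} 𝔼[⟨u, u'⟩^d] · Σ_{α ∈ ℕ^N, |α| = d} Π_{i=1}^N (𝔼_{x∼ν}[h_{α_i}(x)])², where u, u' are drawn independently from 𝒰, |α| := Σ_i α_i, and {h_k}_{k∈ℕ} are the Hermite polynomials normalized so that 𝔼_{z∼N(0,1)}[h_k(z)h_ℓ(z)] = 1{k=ℓ}. -/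

import Mathlib

open MeasureTheory ProbabilityTheory Matrix

/-- Euclidean norm of a vector in `ℝ^k`. -/
noncomputable def eucNorm {k : ℕ} (v : Fin k → ℝ) : ℝ := Real.sqrt (∑ i, (v i) ^ 2)

/-- The normalized (probabilists') Hermite polynomials `h_k`, satisfying
`𝔼_{z ∼ N(0,1)}[h_k(z) h_ℓ(z)] = 1{k = ℓ}`. -/
noncomputable def hermiteN (k : ℕ) (x : ℝ) : ℝ :=
  (Polynomial.aeval x (Polynomial.hermite k)) / Real.sqrt (Nat.factorial k)

theorem derivative_hermite (k : ℕ) :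
    Polynomial.derivative (Polynomial.hermite k) = (k : Polynomial ℤ) * Polynomial.hermite (k - 1) := by
  induction k with
  | zero => simp
  | succ k ih =>
    rw [Polynomial.hermite_succ, Polynomial.derivative_sub, Polynomial.derivative_mul, ih]
    cases k with
    | zero => simp
    | succ k =>
      simp only [Polynomial.derivative_X, Polynomial.derivative_mul, Polynomial.derivative_natCast,
        Nat.add_sub_cancel, Polynomial.hermite_succ k]
      push_cast
      ring

theorem aeval_hermite_succ {R : Type*} [CommRing R] (y : R) (k : ℕ) :
    Polynomial.aeval y (Polynomial.hermite (k + 1)) =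
      y * Polynomial.aeval y (Polynomial.hermite k)
        - k * Polynomial.aeval y (Polynomial.hermite (k - 1)) := by
  rw [Polynomial.hermite_succ, derivative_hermite]
  simp

theorem integrable_pow_gaussianReal (k : ℕ) : Integrable (fun x : ℝ => x ^ k) (gaussianReal 0 1) := by
  have h := (memLp_id_gaussianReal (μ := 0) (v := 1) (k : NNReal))
  rcases Nat.eq_zero_or_pos k with rfl | hk
  · simp
  have := h.integrable_norm_rpow (by simp; omega) (by simp)
  refine (integrable_norm_iff (by fun_prop)).1 ?_
  simpa using this

theorem integrable_eval_gaussianReal (p : Polynomial ℝ) :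
    Integrable (fun x => p.eval x) (gaussianReal 0 1) := by
  induction p using Polynomial.induction_on' with
  | add p q hp hq => simpa [Pi.add_def] using hp.add hq
  | monomial k c => simpa using (integrable_pow_gaussianReal k).const_mul c

theorem integral_mul_eval_gaussianReal (p : Polynomial ℝ) :
    ∫ x, x * p.eval x ∂gaussianReal 0 1 = ∫ x, p.derivative.eval x ∂gaussianReal 0 1 := by
  have hint (q : Polynomial ℝ) : Integrable (fun x => gaussianPDFReal 0 1 x * q.eval x) := by
    have := integrable_eval_gaussianReal q
    rw [gaussianReal_of_var_ne_zero _ one_ne_zero,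
      integrable_withDensity_iff_integrable_smul' (measurable_gaussianPDF _ _)
        (by simp [gaussianPDF_lt_top])] at this
    simpa [toReal_gaussianPDF] using this
  have hd (x : ℝ) : HasDerivAt (gaussianPDFReal 0 1) (gaussianPDFReal 0 1 x * -x) x := by
    have h1 : HasDerivAt (fun x : ℝ => -x ^ 2 / 2) (-x) x := by
      convert! ((hasDerivAt_id x).pow 2).neg.div_const 2 using 1
      simp
      ring
    convert! h1.exp.const_mul (Real.sqrt (2 * Real.pi))⁻¹ using 1
    · ext y; simp [gaussianPDFReal]
    · simp [gaussianPDFReal]; ring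
  have key := integral_eq_zero_of_hasDerivAt_of_integrable
    (f := fun x => gaussianPDFReal 0 1 x * p.eval x)
    (f' := fun x => gaussianPDFReal 0 1 x * (p.derivative - Polynomial.X * p).eval x)
    (fun x => by
      convert! (hd x).mul (p.hasDerivAt x) using 1
      simp; ring) (hint _) (hint _)
  have h2 : ∫ x, (p.derivative - Polynomial.X * p).eval x ∂gaussianReal 0 1 = 0 := by
    rw [integral_gaussianReal_eq_integral_smul one_ne_zero]
    simpa using key
  have h3 := integral_sub (integrable_eval_gaussianReal p.derivative)
    (integrable_eval_gaussianReal (Polynomial.X * p))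
  simp only [Polynomial.eval_sub, Polynomial.eval_mul, Polynomial.eval_X] at h2 h3
  linarith

theorem integral_hermite_mul_hermite (k l : ℕ) :
    ∫ x : ℝ, Polynomial.aeval x (Polynomial.hermite k) * Polynomial.aeval x (Polynomial.hermite l)
      ∂gaussianReal 0 1 = if k = l then (k.factorial : ℝ) else 0 := by
  set H : ℕ → Polynomial ℝ := fun k => (Polynomial.hermite k).map (Int.castRingHom ℝ) with hH
  have hae (k : ℕ) (x : ℝ) : Polynomial.aeval x (Polynomial.hermite k) = (H k).eval x := by
    simp [hH, Polynomial.eval_map, Polynomial.aeval_def]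
  simp only [hae, ← Polynomial.eval_mul]
  have hder (k : ℕ) : (H k).derivative = (k : Polynomial ℝ) * H (k - 1) := by
    simp [hH, Polynomial.derivative_map, derivative_hermite]
  have step (k : ℕ) (q : Polynomial ℝ) : ∫ x, (H (k + 1) * q).eval x ∂gaussianReal 0 1
      = ∫ x, (H k * q.derivative).eval x ∂gaussianReal 0 1 := by
    have h1 : H (k + 1) * q = Polynomial.X * (H k * q) - (H k).derivative * q := by
      simp [hH, Polynomial.derivative_map]; ring
    have h2 := integral_mul_eval_gaussianReal (H k * q)
    rw [h1]
    simp only [Polynomial.eval_sub]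
    rw [integral_sub (integrable_eval_gaussianReal _) (integrable_eval_gaussianReal _)]
    simp only [Polynomial.eval_mul (p := Polynomial.X), Polynomial.eval_X]
    rw [h2, Polynomial.derivative_mul]
    simp only [Polynomial.eval_add]
    rw [integral_add (integrable_eval_gaussianReal _) (integrable_eval_gaussianReal _)]
    ring
  have step0 (l : ℕ) : ∫ x, (H (l + 1) * H 0).eval x ∂gaussianReal 0 1 = 0 := by
    rw [step, hder]; simp
  induction k generalizing l with
  | zero =>
    cases l with
    | zero => simp [hH]
    | succ l => rw [mul_comm, step0]; simp
  | succ k ih =>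
    cases l with
    | zero => rw [step0]; simp
    | succ l =>
      rw [step, hder]
      have : ∀ x, (H k * (((l + 1 : ℕ) : Polynomial ℝ) * H (l + 1 - 1))).eval x
          = (l + 1 : ℝ) * (H k * H l).eval x := by
        intro x; simp; ring
      simp only [this, integral_const_mul, ih]
      by_cases h : k = l
      · subst h; simp [Nat.factorial_succ]
      · simp [h]

theorem integrable_eval_pi_gaussianReal {σ : Type*} [Fintype σ] (p : MvPolynomial σ ℝ) :
    Integrable (fun x => MvPolynomial.eval x p) (Measure.pi fun _ : σ => gaussianReal 0 1) := by
  induction p using MvPolynomial.induction_on' with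
  | add p q hp hq => simpa [Pi.add_def] using hp.add hq
  | monomial a c =>
    simp only [MvPolynomial.eval_monomial, Finsupp.prod_pow]
    exact (Integrable.fintype_prod (fun i => integrable_pow_gaussianReal (a i))).const_mul c

theorem integral_mul_eval_pi_gaussianReal {σ : Type*} [Fintype σ] (p : MvPolynomial σ ℝ) (l : σ) :
    ∫ x, x l * MvPolynomial.eval x p ∂(Measure.pi fun _ : σ => gaussianReal 0 1)
      = ∫ x, MvPolynomial.eval x (MvPolynomial.pderiv l p)
        ∂(Measure.pi fun _ : σ => gaussianReal 0 1) := by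
  classical
  induction p using MvPolynomial.induction_on' with
  | add p q hp hq =>
    have h (r : MvPolynomial σ ℝ) := integrable_eval_pi_gaussianReal (MvPolynomial.X l * r)
    simp only [MvPolynomial.eval_mul, MvPolynomial.eval_X] at h
    simp only [map_add, mul_add]
    rw [integral_add (h p) (h q), integral_add (integrable_eval_pi_gaussianReal _)
      (integrable_eval_pi_gaussianReal _), hp, hq]
  | monomial a c =>
    simp only [MvPolynomial.pderiv_monomial, MvPolynomial.eval_monomial, Finsupp.prod_pow]
    have h1 (x : σ → ℝ) : x l * (c * ∏ i, x i ^ a i)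
        = c * ∏ i, x i ^ (if i = l then a i + 1 else a i) := by
      rw [← Finset.mul_prod_erase _ _ (Finset.mem_univ l),
        ← Finset.mul_prod_erase _ (fun i => x i ^ (if i = l then a i + 1 else a i))
          (Finset.mem_univ l), if_pos rfl]
      rw [Finset.prod_congr rfl (g := fun i => x i ^ a i)
        (s₁ := Finset.univ.erase l) (f := fun i => x i ^ (if i = l then a i + 1 else a i))]
      · ring
      · intro i hi; rw [if_neg (Finset.ne_of_mem_erase hi)]
    simp only [h1, integral_const_mul]
    rw [integral_fintype_prod_eq_prod (fun i (y : ℝ) => y ^ (if i = l then a i + 1 else a i)),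
      integral_fintype_prod_eq_prod (fun i (y : ℝ) => y ^ ((a - Finsupp.single l 1 : σ →₀ ℕ) i)),
      ← Finset.mul_prod_erase _ _ (Finset.mem_univ l),
      ← Finset.mul_prod_erase _ (fun i => ∫ y : ℝ, y ^ ((a - Finsupp.single l 1 : σ →₀ ℕ) i) ∂_)
        (Finset.mem_univ l), if_pos rfl]
    have h2 := integral_mul_eval_gaussianReal (Polynomial.X ^ a l)
    simp only [Polynomial.eval_pow, Polynomial.eval_X, Polynomial.derivative_X_pow,
      Polynomial.eval_mul, Polynomial.eval_C, integral_const_mul, ← pow_succ'] at h2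
    rw [h2, mul_assoc, mul_assoc]
    congr 2
    simp only [Finsupp.coe_tsub, Pi.sub_apply, Finsupp.single_eq_same]
    congr 1
    refine Finset.prod_congr rfl fun i hi => ?_
    have := Finset.ne_of_mem_erase hi
    simp [this]

/-- The product `∏ j, He_{a j}(y j)` of probabilists' Hermite polynomials. -/
noncomputable def hermiteProd {σ R : Type*} [Fintype σ] [CommRing R] (a : σ → ℕ) (y : σ → R) : R :=
  ∏ j, Polynomial.aeval (y j) (Polynomial.hermite (a j))

theorem hermiteProd_eq_mul_erase {σ R : Type*} [Fintype σ] [DecidableEq σ] [CommRing R]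
    (a : σ → ℕ) (y : σ → R) (j : σ) :
    hermiteProd a y = Polynomial.aeval (y j) (Polynomial.hermite (a j)) *
      ∏ i ∈ Finset.univ.erase j, Polynomial.aeval (y i) (Polynomial.hermite (a i)) :=
  (Finset.mul_prod_erase _ _ (Finset.mem_univ j)).symm

theorem hermiteProd_add_single {σ R : Type*} [Fintype σ] [DecidableEq σ] [CommRing R]
    (a : σ → ℕ) (y : σ → R) (j : σ) :
    hermiteProd (a + Pi.single j 1) y
      = y j * hermiteProd a y - a j * hermiteProd (a - Pi.single j 1) y := by
  simp only [hermiteProd_eq_mul_erase _ y j]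
  have h1 : ∏ i ∈ Finset.univ.erase j,
      Polynomial.aeval (y i) (Polynomial.hermite ((a + Pi.single j 1 : σ → ℕ) i))
      = ∏ i ∈ Finset.univ.erase j, Polynomial.aeval (y i) (Polynomial.hermite (a i)) :=
    Finset.prod_congr rfl fun i hi => by simp [Finset.ne_of_mem_erase hi]
  have h2 : ∏ i ∈ Finset.univ.erase j,
      Polynomial.aeval (y i) (Polynomial.hermite ((a - Pi.single j 1 : σ → ℕ) i))
      = ∏ i ∈ Finset.univ.erase j, Polynomial.aeval (y i) (Polynomial.hermite (a i)) :=
    Finset.prod_congr rfl fun i hi => by simp [Finset.ne_of_mem_erase hi]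
  rw [h1, h2, Pi.add_apply, Pi.sub_apply, Pi.single_eq_same, aeval_hermite_succ]
  ring

theorem Derivation.map_finset_prod {R A ι : Type*} [CommRing R] [CommRing A] [Algebra R A]
    [DecidableEq ι] (D : Derivation R A A) (s : Finset ι) (f : ι → A) :
    D (∏ i ∈ s, f i) = ∑ i ∈ s, (∏ k ∈ s.erase i, f k) * D (f i) := by
  induction s using Finset.induction_on with
  | empty => simp
  | insert j s hj ih =>
    rw [Finset.prod_insert hj, D.leibniz, ih, Finset.sum_insert hj, Finset.erase_insert hj,
      smul_eq_mul, smul_eq_mul, Finset.mul_sum, add_comm]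
    congr 1
    refine Finset.sum_congr rfl fun i hi => ?_
    have hij : i ≠ j := fun h => hj (h ▸ hi)
    rw [Finset.erase_insert_of_ne hij.symm, Finset.prod_insert (by simp [hj])]
    ring

theorem Derivation.map_hermiteProd {R A σ : Type*} [Fintype σ] [DecidableEq σ] [CommRing R]
    [CommRing A] [Algebra R A] (D : Derivation R A A) (a : σ → ℕ) (y : σ → A) :
    D (hermiteProd a y) = ∑ j, (a j : A) * D (y j) * hermiteProd (a - Pi.single j 1) y := by
  rw [hermiteProd, D.map_finset_prod]
  refine Finset.sum_congr rfl fun j _ => ?_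
  have h := (D.restrictScalars ℤ).map_aeval (Polynomial.hermite (a j)) (y j)
  simp only [Derivation.restrictScalars_apply] at h
  rw [h, derivative_hermite, hermiteProd_eq_mul_erase _ y j]
  have h2 : ∏ i ∈ Finset.univ.erase j,
      Polynomial.aeval (y i) (Polynomial.hermite ((a - Pi.single j 1 : σ → ℕ) i))
      = ∏ i ∈ Finset.univ.erase j, Polynomial.aeval (y i) (Polynomial.hermite (a i)) :=
    Finset.prod_congr rfl fun i hi => by simp [Finset.ne_of_mem_erase hi]
  rw [h2]
  simp
  ring

theorem MvPolynomial.eval_hermiteProd {σ τ : Type*} [Fintype σ] (a : σ → ℕ)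
    (y : σ → MvPolynomial τ ℝ) (z : τ → ℝ) :
    MvPolynomial.eval z (hermiteProd a y) = hermiteProd a fun j => MvPolynomial.eval z (y j) := by
  simp only [hermiteProd, map_prod]
  refine Finset.prod_congr rfl fun j _ => ?_
  exact (Polynomial.aeval_algHom_apply ((MvPolynomial.eval z).toIntAlgHom) (y j) _).symm

/-- The expectation of a polynomial under the standard Gaussian measure, as a linear functional. -/
noncomputable def gaussianExpectation (σ : Type*) [Fintype σ] : MvPolynomial σ ℝ →ₗ[ℝ] ℝ where
  toFun p := ∫ x, MvPolynomial.eval x p ∂(Measure.pi fun _ : σ => gaussianReal 0 1)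
  map_add' p q := by
    simp only [map_add]
    exact integral_add (integrable_eval_pi_gaussianReal _) (integrable_eval_pi_gaussianReal _)
  map_smul' c p := by
    simp only [MvPolynomial.smul_eval, integral_const_mul, RingHom.id_apply, smul_eq_mul]

theorem gaussianExpectation_X_mul {σ : Type*} [Fintype σ] (p : MvPolynomial σ ℝ) (l : σ) :
    gaussianExpectation σ (MvPolynomial.X l * p)
      = gaussianExpectation σ (MvPolynomial.pderiv l p) := by
  have := integral_mul_eval_pi_gaussianReal p l
  simpa [gaussianExpectation] using this

theorem integral_hermiteProd_projection {σ : Type*} [Fintype σ] (u : σ → ℝ)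
    (hu : ∑ i, u i ^ 2 = 1) (x : ℝ) (a : σ → ℕ) :
    ∫ z : σ → ℝ, hermiteProd a (fun j => x * u j + z j - (∑ l, z l * u l) * u j)
        ∂(Measure.pi fun _ : σ => gaussianReal 0 1)
      = (∏ j, u j ^ a j) * Polynomial.aeval x (Polynomial.hermite (∑ j, a j)) := by
  classical
  set y : σ → MvPolynomial σ ℝ := fun j =>
    MvPolynomial.C (x * u j) + MvPolynomial.X j
      - (∑ l, MvPolynomial.X l * MvPolynomial.C (u l)) * MvPolynomial.C (u j) with hy
  set E := gaussianExpectation σ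
  have hE (a : σ → ℕ) : ∫ z : σ → ℝ,
      hermiteProd a (fun j => x * u j + z j - (∑ l, z l * u l) * u j)
        ∂(Measure.pi fun _ : σ => gaussianReal 0 1) = E (hermiteProd a y) := by
    refine integral_congr_ae (ae_of_all _ fun z => ?_)
    simp [MvPolynomial.eval_hermiteProd, hy]
  have hpd (l k : σ) : MvPolynomial.pderiv l (y k)
      = MvPolynomial.C ((if k = l then 1 else 0) - u l * u k) := by
    simp only [hy, map_sub, map_add, MvPolynomial.pderiv_C, MvPolynomial.pderiv_X,
      Derivation.leibniz, map_sum, smul_eq_mul, map_mul]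
    simp [Pi.single_apply]
    exact mul_comm _ _
  have hXP (l : σ) (b : σ → ℕ) : E (MvPolynomial.X l * hermiteProd b y)
      = ∑ k, ((if k = l then 1 else 0) - u l * u k) * (b k * E (hermiteProd (b - Pi.single k 1) y)) := by
    rw [gaussianExpectation_X_mul, Derivation.map_hermiteProd, map_sum]
    refine Finset.sum_congr rfl fun k _ => ?_
    rw [hpd, ← map_natCast (MvPolynomial.C (σ := σ) (R := ℝ)), ← map_mul, ← MvPolynomial.smul_eq_C_mul,
      map_smul, smul_eq_mul]
    ring
  have hrec (b : σ → ℕ) (j : σ) : E (hermiteProd (b + Pi.single j 1) y)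
      = u j * (x * E (hermiteProd b y)
          - ∑ k, b k * (u k * E (hermiteProd (b - Pi.single k 1) y))) := by
    have h1 : hermiteProd (b + Pi.single j 1) y = (x * u j) • hermiteProd b y
        + MvPolynomial.X j * hermiteProd b y
        - u j • ∑ l, u l • (MvPolynomial.X l * hermiteProd b y)
        - (b j : ℝ) • hermiteProd (b - Pi.single j 1) y := by
      rw [hermiteProd_add_single]
      simp only [hy, MvPolynomial.smul_eq_C_mul, map_natCast, sub_mul, add_mul, Finset.mul_sum,
        Finset.sum_mul]
      congr 2
      refine Finset.sum_congr rfl fun l _ => ?_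
      ring
    have h2 : ∑ l, u l * E (MvPolynomial.X l * hermiteProd b y) = 0 := by
      simp only [hXP, Finset.mul_sum]
      rw [Finset.sum_comm]
      refine Finset.sum_eq_zero fun k _ => ?_
      have h3 : ∑ l, u l * ((if k = l then 1 else 0) - u l * u k) = 0 := by
        simp only [mul_sub, Finset.sum_sub_distrib, mul_ite, mul_one, mul_zero,
          Finset.sum_ite_eq, Finset.mem_univ, if_true, ← mul_assoc, ← Finset.sum_mul, ← pow_two, hu,
          one_mul, sub_self]
      simp only [← mul_assoc, ← Finset.sum_mul] at h3 ⊢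
      rw [h3]; simp
    rw [h1, map_sub, map_sub, map_add, map_smul, map_smul, map_smul, map_sum]
    simp only [map_smul, smul_eq_mul, h2]
    rw [hXP]
    simp only [sub_mul, Finset.sum_sub_distrib, ite_mul, one_mul, zero_mul, Finset.sum_ite_eq',
      Finset.mem_univ, if_true, mul_sub, Finset.mul_sum]
    have h4 : ∑ k, u j * u k * (b k * E (hermiteProd (b - Pi.single k 1) y))
      = ∑ k, u j * (b k * (u k * E (hermiteProd (b - Pi.single k 1) y))) :=
      Finset.sum_congr rfl fun k _ => by ring
    rw [h4]
    ring
  rw [hE]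
  induction hn : ∑ j, a j using Nat.strong_induction_on generalizing a with
  | _ n ih =>
  by_cases h0 : a = 0
  · subst h0
    simp only [Pi.zero_apply, Finset.sum_const_zero] at hn
    subst hn
    simp [hermiteProd, E, gaussianExpectation]
  obtain ⟨j, hj⟩ : ∃ j, a j ≠ 0 := by
    by_contra! h; exact h0 (funext h)
  obtain ⟨b, rfl⟩ : ∃ b : σ → ℕ, a = b + Pi.single j 1 := by
    refine ⟨a - Pi.single j 1, ?_⟩
    ext i
    by_cases hi : i = j
    · subst hi; simp; omega
    · simp [hi]
  have hsum (b : σ → ℕ) (j : σ) : ∑ i, (b + Pi.single j 1 : σ → ℕ) i = ∑ i, b i + 1 := by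
    simp [Finset.sum_add_distrib]
  have hpow (b : σ → ℕ) (j : σ) : ∏ i, u i ^ (b + Pi.single j 1 : σ → ℕ) i
      = (∏ i, u i ^ b i) * u j := by
    simp only [Pi.add_apply, pow_add, Finset.prod_mul_distrib]
    congr 1
    rw [Finset.prod_eq_single j] <;> simp +contextual
  rw [hsum] at hn
  subst hn
  rw [hrec, hpow, aeval_hermite_succ, ih _ (Nat.lt_succ_self _) b rfl]
  have hk (k : σ) : (b k : ℝ) * (u k * E (hermiteProd (b - Pi.single k 1) y))
      = b k * ((∏ i, u i ^ b i) * Polynomial.aeval x (Polynomial.hermite (∑ i, b i - 1))) := by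
    rcases Nat.eq_zero_or_pos (b k) with h | h
    · simp [h]
    obtain ⟨c, hc⟩ : ∃ c : σ → ℕ, b = c + Pi.single k 1 := by
      refine ⟨b - Pi.single k 1, ?_⟩
      ext i
      by_cases hi : i = k
      · subst hi; simp; omega
      · simp [hi]
    have h5 : b - Pi.single k 1 = c := by rw [hc]; simp
    have h6 : ∑ i, b i = ∑ i, c i + 1 := by rw [hc, hsum]
    have h7 : ∏ i, u i ^ b i = (∏ i, u i ^ c i) * u k := by rw [hc, hpow]
    rw [h5, ih (∑ i, c i) (by omega) c rfl, h6, h7]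
    simp only [Nat.add_sub_cancel]
    ring
  simp only [hk, ← Finset.sum_mul]
  push_cast
  ring

theorem X_mul_mem_span_hermiteProd {σ : Type*} [Fintype σ] {d : ℕ} {p : MvPolynomial σ ℝ}
    (hp : p ∈ Submodule.span ℝ
      ((fun a : σ → ℕ => hermiteProd a MvPolynomial.X) '' {a | ∑ i, a i ≤ d})) (q : σ) :
    MvPolynomial.X q * p ∈ Submodule.span ℝ
      ((fun a : σ → ℕ => (hermiteProd a MvPolynomial.X : MvPolynomial σ ℝ)) ''
        {a | ∑ i, a i ≤ d + 1}) := by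
  classical
  induction hp using Submodule.span_induction with
  | zero => simp
  | add p r _ _ hp hr => rw [mul_add]; exact add_mem hp hr
  | smul c p _ hp => rw [mul_smul_comm]; exact Submodule.smul_mem _ _ hp
  | mem p hp =>
    obtain ⟨b, hb, rfl⟩ := hp
    have h : (MvPolynomial.X q : MvPolynomial σ ℝ) * hermiteProd b MvPolynomial.X
        = hermiteProd (b + Pi.single q 1) MvPolynomial.X
          + (b q : ℝ) • hermiteProd (b - Pi.single q 1) MvPolynomial.X := by
      rw [hermiteProd_add_single, MvPolynomial.smul_eq_C_mul, map_natCast]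
      ring
    simp only [Set.mem_ofPred_eq] at hb
    simp only [h]
    refine add_mem (Submodule.subset_span ⟨_, ?_, rfl⟩)
      (Submodule.smul_mem _ _ (Submodule.subset_span ⟨_, ?_, rfl⟩))
    · simp [Finset.sum_add_distrib, hb]
    · refine (Finset.sum_le_sum fun i _ => ?_).trans (hb.trans (Nat.le_succ d))
      simp

theorem mem_span_hermiteProd_of_totalDegree_le {σ : Type*} [Fintype σ] {d : ℕ}
    {f : MvPolynomial σ ℝ} (hf : f.totalDegree ≤ d) :
    f ∈ Submodule.span ℝ
      ((fun a : σ → ℕ => (hermiteProd a MvPolynomial.X : MvPolynomial σ ℝ)) ''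
        {a | ∑ i, a i ≤ d}) := by
  classical
  have key (d : ℕ) (a : σ →₀ ℕ) (ha : ∑ i, a i = d) : MvPolynomial.monomial a (1 : ℝ) ∈
      Submodule.span ℝ ((fun a : σ → ℕ => (hermiteProd a MvPolynomial.X : MvPolynomial σ ℝ)) ''
        {a | ∑ i, a i ≤ d}) := by
    induction d generalizing a with
    | zero =>
      have h0 : a = 0 := by
        ext i; simpa using (Finset.sum_eq_zero_iff.1 ha) i (Finset.mem_univ i)
      subst h0
      refine Submodule.subset_span ⟨0, by simp, by simp [hermiteProd]⟩
    | succ d ih =>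
      obtain ⟨j, hj⟩ : ∃ j, a j ≠ 0 := by
        by_contra! h
        simp [h] at ha
      have hab : Finsupp.single j 1 + (a - Finsupp.single j 1) = a := by
        ext i
        by_cases hi : j = i
        · subst hi; simp; omega
        · simp [hi]
      have hb : ∑ i, (a - Finsupp.single j 1 : σ →₀ ℕ) i = d := by
        rw [← hab] at ha
        simp only [Finsupp.add_apply, Finset.sum_add_distrib] at ha
        simp only [Finsupp.single_apply, Finset.sum_ite_eq, Finset.mem_univ, if_true] at ha
        omega
      have := X_mul_mem_span_hermiteProd (ih _ hb) j
      rwa [MvPolynomial.X, MvPolynomial.monomial_mul, one_mul, hab] at this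
  rw [← MvPolynomial.support_sum_monomial_coeff f]
  refine sum_mem fun a ha => ?_
  have h1 : MvPolynomial.monomial a (MvPolynomial.coeff a f)
      = MvPolynomial.coeff a f • MvPolynomial.monomial a (1 : ℝ) := by
    rw [MvPolynomial.smul_monomial, smul_eq_mul, mul_one]
  have h2 := MvPolynomial.le_totalDegree ha
  rw [Finsupp.sum_fintype _ _ (by simp)] at h2
  rw [h1]
  refine Submodule.smul_mem _ _ (Submodule.span_mono (Set.image_mono ?_) (key _ a rfl))
  intro b hb
  exact le_trans hb (h2.trans hf)

theorem totalDegree_hermiteProd_X_le {σ : Type*} [Fintype σ] (a : σ → ℕ) :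
    (hermiteProd a MvPolynomial.X : MvPolynomial σ ℝ).totalDegree ≤ ∑ i, a i := by
  refine (MvPolynomial.totalDegree_finsetProd _ _).trans (Finset.sum_le_sum fun i _ => ?_)
  rw [Polynomial.aeval_eq_sum_range, Polynomial.natDegree_hermite]
  refine MvPolynomial.totalDegree_finsetSum_le fun k hk => ?_
  rw [← Int.cast_smul_eq_zsmul ℝ]
  refine (MvPolynomial.totalDegree_smul_le _ _).trans ?_
  rw [MvPolynomial.totalDegree_X_pow]
  exact Nat.lt_succ_iff.1 (Finset.mem_range.1 hk)

theorem integral_hermiteN_mul_hermiteN (k l : ℕ) :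
    ∫ x : ℝ, hermiteN k x * hermiteN l x ∂gaussianReal 0 1 = if k = l then 1 else 0 := by
  have h (x : ℝ) : hermiteN k x * hermiteN l x = (Real.sqrt k.factorial * Real.sqrt l.factorial)⁻¹ *
      (Polynomial.aeval x (Polynomial.hermite k) * Polynomial.aeval x (Polynomial.hermite l)) := by
    simp only [hermiteN]; field_simp
  simp only [h, integral_const_mul, integral_hermite_mul_hermite]
  split_ifs with hkl
  · subst hkl
    rw [Real.mul_self_sqrt (Nat.cast_nonneg _), inv_mul_cancel₀]
    exact_mod_cast Nat.factorial_ne_zero k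
  · simp

theorem integrable_hermiteN_mul_hermiteN (k l : ℕ) :
    Integrable (fun x => hermiteN k x * hermiteN l x) (gaussianReal 0 1) := by
  have h (k : ℕ) (x : ℝ) : Polynomial.aeval x (Polynomial.hermite k)
      = ((Polynomial.hermite k).map (Int.castRingHom ℝ)).eval x := by
    simp [Polynomial.eval_map, Polynomial.aeval_def]
  simp only [hermiteN, div_mul_div_comm]
  refine Integrable.div_const ?_ _
  simp only [h, ← Polynomial.eval_mul]
  exact integrable_eval_gaussianReal _

/-- The normalized Hermite polynomial of multi-index `A` in the entries of an `N × n` matrix. -/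
noncomputable def hermiteMatrix {N n : ℕ} (A : Fin N → Fin n → ℕ) :
    MvPolynomial (Fin N × Fin n) ℝ :=
  (∏ i, ∏ j, (Real.sqrt (A i j).factorial)⁻¹) • hermiteProd (fun q => A q.1 q.2) MvPolynomial.X

theorem eval_hermiteMatrix {N n : ℕ} (A : Fin N → Fin n → ℕ) (Y : Fin N → Fin n → ℝ) :
    MvPolynomial.eval (fun q => Y q.1 q.2) (hermiteMatrix A)
      = ∏ i, ∏ j, hermiteN (A i j) (Y i j) := by
  rw [hermiteMatrix, MvPolynomial.smul_eval, MvPolynomial.eval_hermiteProd]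
  simp only [MvPolynomial.eval_X, hermiteProd, Fintype.prod_prod_type, ← Finset.prod_mul_distrib,
    hermiteN, div_eq_inv_mul]

theorem totalDegree_hermiteMatrix_le {N n : ℕ} (A : Fin N → Fin n → ℕ) :
    (hermiteMatrix A).totalDegree ≤ ∑ i, ∑ j, A i j := by
  refine (MvPolynomial.totalDegree_smul_le _ _).trans ((totalDegree_hermiteProd_X_le _).trans ?_)
  rw [Fintype.sum_prod_type]

theorem exists_eq_sum_hermiteMatrix {N n D : ℕ} (T : Finset (Fin N → Fin n → ℕ))
    (hT : ∀ A, ∑ i, ∑ j, A i j ≤ D → A ∈ T) (f : MvPolynomial (Fin N × Fin n) ℝ)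
    (hf : f.totalDegree ≤ D) : ∃ g : (Fin N → Fin n → ℕ) → ℝ,
      f = ∑ A ∈ T, g A • hermiteMatrix A := by
  have h : f ∈ Submodule.span ℝ (hermiteMatrix '' (T : Set (Fin N → Fin n → ℕ))) := by
    refine Submodule.span_le.2 ?_ (mem_span_hermiteProd_of_totalDegree_le hf)
    rintro _ ⟨b, hb, rfl⟩
    have h1 : (hermiteProd b MvPolynomial.X : MvPolynomial (Fin N × Fin n) ℝ)
        = (∏ i, ∏ j, Real.sqrt (b (i, j)).factorial) • hermiteMatrix fun i j => b (i, j) := by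
      rw [hermiteMatrix, smul_smul]
      simp only [← Finset.prod_mul_distrib]
      rw [Finset.prod_eq_one, one_smul]
      intro i _
      refine Finset.prod_eq_one fun j _ => mul_inv_cancel₀ ?_
      rw [Real.sqrt_ne_zero (Nat.cast_nonneg _)]
      exact_mod_cast Nat.factorial_ne_zero _
    simp only [SetLike.mem_coe, h1]
    refine Submodule.smul_mem _ _ (Submodule.subset_span ⟨_, hT _ ?_, rfl⟩)
    simpa [Fintype.sum_prod_type] using hb
  rw [Submodule.mem_span_image_finset_iff_exists_fun'] at h
  obtain ⟨g, hg⟩ := h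
  exact ⟨g, hg.symm⟩

theorem integrable_hermiteMatrix_mul {N n : ℕ} (A B : Fin N → Fin n → ℕ) :
    Integrable (fun Y : Fin N → Fin n → ℝ =>
      MvPolynomial.eval (fun q => Y q.1 q.2) (hermiteMatrix A) *
        MvPolynomial.eval (fun q => Y q.1 q.2) (hermiteMatrix B))
      (Measure.pi fun _ : Fin N => Measure.pi fun _ : Fin n => gaussianReal 0 1) := by
  simp only [eval_hermiteMatrix, ← Finset.prod_mul_distrib]
  exact Integrable.fintype_prod fun i => Integrable.fintype_prod fun j =>
    integrable_hermiteN_mul_hermiteN (A i j) (B i j)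

theorem integral_hermiteMatrix_mul {N n : ℕ} (A B : Fin N → Fin n → ℕ) :
    ∫ Y : Fin N → Fin n → ℝ,
      MvPolynomial.eval (fun q => Y q.1 q.2) (hermiteMatrix A) *
        MvPolynomial.eval (fun q => Y q.1 q.2) (hermiteMatrix B)
      ∂(Measure.pi fun _ : Fin N => Measure.pi fun _ : Fin n => gaussianReal 0 1)
      = if A = B then 1 else 0 := by
  simp only [eval_hermiteMatrix, ← Finset.prod_mul_distrib]
  rw [integral_fintype_prod_eq_prod
    (fun i (y : Fin n → ℝ) => ∏ j, hermiteN (A i j) (y j) * hermiteN (B i j) (y j))]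
  have h (i : Fin N) := integral_fintype_prod_eq_prod (μ := fun _ : Fin n => gaussianReal 0 1)
    (fun j (y : ℝ) => hermiteN (A i j) y * hermiteN (B i j) y)
  simp only [h, integral_hermiteN_mul_hermiteN]
  simp only [Finset.prod_ite_zero, Finset.prod_const_one, Finset.mem_univ, forall_true_left,
    funext_iff]

theorem integral_sq_sum_hermiteMatrix {N n : ℕ} (T : Finset (Fin N → Fin n → ℕ))
    (g : (Fin N → Fin n → ℕ) → ℝ) :
    ∫ Y : Fin N → Fin n → ℝ,
      (MvPolynomial.eval (fun q => Y q.1 q.2) (∑ A ∈ T, g A • hermiteMatrix A)) ^ 2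
      ∂(Measure.pi fun _ : Fin N => Measure.pi fun _ : Fin n => gaussianReal 0 1)
      = ∑ A ∈ T, g A ^ 2 := by
  simp only [map_sum, MvPolynomial.smul_eval, pow_two, Finset.sum_mul_sum, mul_mul_mul_comm]
  rw [integral_finsetSum _ fun A _ => integrable_finsetSum _ fun B _ =>
    (integrable_hermiteMatrix_mul A B).const_mul _]
  refine Finset.sum_congr rfl fun A hA => ?_
  rw [integral_finsetSum _ fun B _ => (integrable_hermiteMatrix_mul A B).const_mul _]
  simp [integral_const_mul, integral_hermiteMatrix_mul, hA]

theorem sq_sSup_eq_sum_sq {ι : Type*} (T : Finset ι) (c : ι → ℝ) (hc : ∑ A ∈ T, c A ^ 2 ≠ 0)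
    (S : Set ℝ)
    (h1 : ∀ r ∈ S, ∃ g : ι → ℝ, r = (∑ A ∈ T, g A * c A) / Real.sqrt (∑ A ∈ T, g A ^ 2))
    (h2 : ∀ g : ι → ℝ, ∑ A ∈ T, g A ^ 2 ≠ 0 →
      (∑ A ∈ T, g A * c A) / Real.sqrt (∑ A ∈ T, g A ^ 2) ∈ S) :
    sSup S ^ 2 = ∑ A ∈ T, c A ^ 2 := by
  have h0 : 0 ≤ ∑ A ∈ T, c A ^ 2 := Finset.sum_nonneg fun _ _ => sq_nonneg _
  have hmax : IsGreatest S (Real.sqrt (∑ A ∈ T, c A ^ 2)) := by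
    constructor
    · have := h2 c hc
      simpa only [← pow_two, Real.div_sqrt] using this
    · intro r hr
      obtain ⟨g, rfl⟩ := h1 r hr
      refine div_le_of_le_mul₀ (Real.sqrt_nonneg _) (Real.sqrt_nonneg _) ?_
      rw [mul_comm]
      exact Real.sum_mul_le_sqrt_mul_sqrt _ _ _
  rw [hmax.csSup_eq, Real.sq_sqrt h0]

theorem exists_abs_hermiteN_le (k : ℕ) : ∃ C : ℝ, 0 ≤ C ∧ ∀ y : ℝ, |hermiteN k y| ≤ C * (1 + |y|) ^ k := by
  refine ⟨(∑ i ∈ Finset.range (k + 1), |((Polynomial.hermite k).coeff i : ℝ)|)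
    / Real.sqrt k.factorial, by positivity, fun y => ?_⟩
  rw [hermiteN, abs_div, abs_of_nonneg (Real.sqrt_nonneg _), div_mul_eq_mul_div]
  gcongr
  rw [Polynomial.aeval_eq_sum_range, Polynomial.natDegree_hermite, Finset.sum_mul]
  refine (Finset.abs_sum_le_sum_abs _ _).trans (Finset.sum_le_sum fun i hi => ?_)
  rw [zsmul_eq_mul, abs_mul, abs_pow]
  gcongr
  calc |y| ^ i ≤ (1 + |y|) ^ i := by gcongr; linarith
    _ ≤ (1 + |y|) ^ k := pow_le_pow_right₀ (by linarith [abs_nonneg y])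
      (Nat.lt_succ_iff.1 (Finset.mem_range.1 hi))

theorem one_add_sum_le_prod_one_add {ι : Type*} (s : Finset ι) (f : ι → ℝ) (hf : ∀ i, 0 ≤ f i) :
    1 + ∑ i ∈ s, f i ≤ ∏ i ∈ s, (1 + f i) := by
  classical
  induction s using Finset.induction_on with
  | empty => simp
  | insert j s hj ih =>
    rw [Finset.sum_insert hj, Finset.prod_insert hj]
    have h1 := Finset.sum_nonneg fun i (_ : i ∈ s) => hf i
    nlinarith [hf j, mul_nonneg (hf j) h1]

theorem integrable_one_add_abs_pow {ν : Measure ℝ} [IsProbabilityMeasure ν] {D : ℕ}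
    (hmom : ∀ k : ℕ, k ≤ D → Integrable (fun x : ℝ => |x| ^ k) ν) {k : ℕ} (hk : k ≤ D) :
    Integrable (fun x : ℝ => (1 + |x|) ^ k) ν := by
  simp only [add_pow, one_pow, one_mul]
  exact integrable_finsetSum _ fun i _ => (hmom _ (by omega)).mul_const _

theorem ae_sum_sq_eq_one {n : ℕ} {μU : Measure (Fin n → ℝ)} [IsProbabilityMeasure μU]
    (hsphere : μU {u | eucNorm u = 1} = 1) : ∀ᵐ u ∂μU, ∑ i, u i ^ 2 = 1 := by
  have hm : MeasurableSet {u : Fin n → ℝ | eucNorm u = 1} := by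
    refine (measurableSet_singleton (1 : ℝ)).preimage (f := eucNorm) ?_
    unfold eucNorm
    fun_prop
  filter_upwards [(mem_ae_iff_prob_eq_one hm).2 hsphere] with u hu
  exact Real.sqrt_eq_one.1 hu

theorem abs_le_one_of_sum_sq_eq_one {ι : Type*} [Fintype ι] {u : ι → ℝ} (hu : ∑ i, u i ^ 2 = 1)
    (j : ι) : |u j| ≤ 1 := by
  rw [← sq_le_one_iff_abs_le_one, ← hu]
  exact Finset.single_le_sum (f := fun i => u i ^ 2) (fun i _ => sq_nonneg _) (Finset.mem_univ j)

theorem one_add_abs_projection_le {ι : Type*} [Fintype ι] {u : ι → ℝ} (hu : ∑ i, u i ^ 2 = 1)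
    (x : ℝ) (z : ι → ℝ) (j : ι) :
    1 + |x * u j + z j - (∑ l, z l * u l) * u j| ≤ (1 + |x|) * (∏ l, (1 + |z l|)) ^ 2 := by
  have hu1 := abs_le_one_of_sum_sq_eq_one hu
  have hs : |∑ l, z l * u l| ≤ ∑ l, |z l| := by
    refine (Finset.abs_sum_le_sum_abs _ _).trans (Finset.sum_le_sum fun l _ => ?_)
    rw [abs_mul]
    exact mul_le_of_le_one_right (abs_nonneg _) (hu1 l)
  have hj : |z j| ≤ ∑ l, |z l| :=
    Finset.single_le_sum (f := fun l => |z l|) (fun l _ => abs_nonneg _) (Finset.mem_univ j)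
  have h1 : |x * u j + z j - (∑ l, z l * u l) * u j| ≤ |x| + |z j| + |∑ l, z l * u l| := by
    refine (abs_sub _ _).trans (add_le_add ((abs_add_le _ _).trans (add_le_add ?_ le_rfl)) ?_)
    · rw [abs_mul]; exact mul_le_of_le_one_right (abs_nonneg _) (hu1 j)
    · rw [abs_mul]; exact mul_le_of_le_one_right (abs_nonneg _) (hu1 j)
  have h2 := one_add_sum_le_prod_one_add Finset.univ (fun l => |z l|) fun l => abs_nonneg _
  have h3 : 0 ≤ ∑ l, |z l| := Finset.sum_nonneg fun l _ => abs_nonneg _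
  set s := ∑ l, |z l|
  have h4 := mul_nonneg (abs_nonneg x) h3
  have h5 := mul_nonneg (abs_nonneg x) (sq_nonneg s)
  have h6 : (1 + s) ^ 2 ≤ (∏ l, (1 + |z l|)) ^ 2 := pow_le_pow_left₀ (by linarith) h2 2
  have h7 : 1 + |x| + 2 * s ≤ (1 + |x|) * (1 + s) ^ 2 := by nlinarith [sq_nonneg s]
  have h8 := mul_le_mul_of_nonneg_left h6 (by positivity : 0 ≤ 1 + |x|)
  linarith

theorem continuous_hermiteN (k : ℕ) : Continuous (hermiteN k) := by
  unfold hermiteN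
  exact (Polynomial.continuous_aeval _).div_const _

theorem integrable_prod_hermiteN_planted {N n D : ℕ} {μU : Measure (Fin n → ℝ)}
    [IsProbabilityMeasure μU] (hu : ∀ᵐ u ∂μU, ∑ i, u i ^ 2 = 1) {ν : Measure ℝ}
    [IsProbabilityMeasure ν] (hmom : ∀ k : ℕ, k ≤ D → Integrable (fun x : ℝ => |x| ^ k) ν)
    (A : Fin N → Fin n → ℕ) (hA : ∑ i, ∑ j, A i j ≤ D) :
    Integrable (fun w : ((Fin n → ℝ) × (Fin N → ℝ)) × (Fin N → Fin n → ℝ) =>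
      ∏ i, ∏ j, hermiteN (A i j)
        (w.1.2 i * w.1.1 j + w.2 i j - (∑ l, w.2 i l * w.1.1 l) * w.1.1 j))
      ((μU.prod (Measure.pi fun _ : Fin N => ν)).prod
        (Measure.pi fun _ : Fin N => Measure.pi fun _ : Fin n => gaussianReal 0 1)) := by
  choose C hC0 hC using exists_abs_hermiteN_le
  have hx : Integrable (fun x : Fin N → ℝ => ∏ i, (1 + |x i|) ^ ∑ j, A i j)
      (Measure.pi fun _ : Fin N => ν) :=
    Integrable.fintype_prod (f := fun i (x : ℝ) => (1 + |x|) ^ ∑ j, A i j) fun i =>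
      integrable_one_add_abs_pow hmom ((Finset.single_le_sum (f := fun i => ∑ j, A i j)
        (fun _ _ => Nat.zero_le _) (Finset.mem_univ i)).trans hA)
  have hg (k : ℕ) : Integrable (fun x : ℝ => (1 + |x|) ^ k) (gaussianReal 0 1) := by
    refine integrable_one_add_abs_pow (D := k) (fun m _ => ?_) le_rfl
    simpa using (integrable_pow_gaussianReal m).norm
  have hz : Integrable (fun z : Fin N → Fin n → ℝ =>
      ∏ i, ∏ l, (1 + |z i l|) ^ (2 * ∑ j, A i j))
      (Measure.pi fun _ : Fin N => Measure.pi fun _ : Fin n => gaussianReal 0 1) :=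
    Integrable.fintype_prod
      (f := fun i (z : Fin n → ℝ) => ∏ l, (1 + |z l|) ^ (2 * ∑ j, A i j)) fun i =>
      Integrable.fintype_prod (f := fun _ (z : ℝ) => (1 + |z|) ^ (2 * ∑ j, A i j)) fun l => hg _
  refine Integrable.mono' (((hx.comp_snd μU).mul_prod hz).const_mul (∏ i, ∏ j, C (A i j))) ?_ ?_
  · refine Continuous.aestronglyMeasurable ?_
    refine continuous_finsetProd _ fun i _ => continuous_finsetProd _ fun j _ =>
      (continuous_hermiteN _).comp ?_
    fun_prop
  · filter_upwards [Measure.quasiMeasurePreserving_fst.ae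
      (Measure.quasiMeasurePreserving_fst.ae hu)] with w hw
    rw [Real.norm_eq_abs, Finset.abs_prod, ← Finset.prod_mul_distrib, ← Finset.prod_mul_distrib]
    refine Finset.prod_le_prod (fun _ _ => abs_nonneg _) fun i _ => ?_
    rw [Finset.abs_prod]
    have h1 : (1 + |w.1.2 i|) ^ (∑ j, A i j) * ∏ l, (1 + |w.2 i l|) ^ (2 * ∑ j, A i j)
        = ∏ j, ((1 + |w.1.2 i|) * (∏ l, (1 + |w.2 i l|)) ^ 2) ^ A i j := by
      rw [Finset.prod_pow_eq_pow_sum, mul_pow, ← pow_mul, Finset.prod_pow]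
    rw [h1, ← Finset.prod_mul_distrib]
    refine Finset.prod_le_prod (fun _ _ => abs_nonneg _) fun j _ => (hC _ _).trans ?_
    exact mul_le_mul_of_nonneg_left (pow_le_pow_left₀ (by positivity)
      (one_add_abs_projection_le hw _ _ _) _) (hC0 _)

theorem integral_prod_hermiteN_projection {n : ℕ} {u : Fin n → ℝ} (hu : ∑ i, u i ^ 2 = 1) (x : ℝ)
    (a : Fin n → ℕ) :
    ∫ z : Fin n → ℝ, ∏ j, hermiteN (a j) (x * u j + z j - (∑ l, z l * u l) * u j)
        ∂(Measure.pi fun _ : Fin n => gaussianReal 0 1)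
      = (∏ j, u j ^ a j) *
        (Real.sqrt (Nat.multinomial Finset.univ a) * hermiteN (∑ j, a j) x) := by
  have h := integral_hermiteProd_projection u hu x a
  simp only [hermiteProd] at h
  simp only [hermiteN, Finset.prod_div_distrib, integral_div, h]
  have h0 : (∏ j, Real.sqrt (a j).factorial) ≠ 0 := Finset.prod_ne_zero_iff.2 fun j _ => by
    rw [Real.sqrt_ne_zero (Nat.cast_nonneg _)]
    exact_mod_cast Nat.factorial_ne_zero _
  have h1 : Real.sqrt (∑ j, a j).factorial ≠ 0 := by
    rw [Real.sqrt_ne_zero (Nat.cast_nonneg _)]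
    exact_mod_cast Nat.factorial_ne_zero _
  have h2 : (∏ j, Real.sqrt (a j).factorial) * Real.sqrt (Nat.multinomial Finset.univ a)
      = Real.sqrt (∑ j, a j).factorial := by
    rw [← Nat.multinomial_spec, Nat.cast_mul, Real.sqrt_mul (Nat.cast_nonneg _), Nat.cast_prod,
      Real.sqrt_prod _ fun _ _ => Nat.cast_nonneg _]
  field_simp
  rw [← h2]
  ring

theorem integral_prod_hermiteN_planted {N n D : ℕ} {μU : Measure (Fin n → ℝ)}
    [IsProbabilityMeasure μU] (hu : ∀ᵐ u ∂μU, ∑ i, u i ^ 2 = 1) {ν : Measure ℝ}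
    [IsProbabilityMeasure ν] (hmom : ∀ k : ℕ, k ≤ D → Integrable (fun x : ℝ => |x| ^ k) ν)
    (A : Fin N → Fin n → ℕ) (hA : ∑ i, ∑ j, A i j ≤ D) :
    ∫ w : ((Fin n → ℝ) × (Fin N → ℝ)) × (Fin N → Fin n → ℝ),
      ∏ i, ∏ j, hermiteN (A i j)
        (w.1.2 i * w.1.1 j + w.2 i j - (∑ l, w.2 i l * w.1.1 l) * w.1.1 j)
      ∂((μU.prod (Measure.pi fun _ : Fin N => ν)).prod
        (Measure.pi fun _ : Fin N => Measure.pi fun _ : Fin n => gaussianReal 0 1))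
      = (∫ u, ∏ i, ∏ j, u j ^ A i j ∂μU) *
        ∏ i, Real.sqrt (Nat.multinomial Finset.univ (A i)) * ∫ x, hermiteN (∑ j, A i j) x ∂ν := by
  rw [integral_prod _ (integrable_prod_hermiteN_planted hu hmom A hA)]
  have h : ∀ᵐ p : (Fin n → ℝ) × (Fin N → ℝ) ∂(μU.prod (Measure.pi fun _ : Fin N => ν)),
      ∫ z : Fin N → Fin n → ℝ, ∏ i, ∏ j, hermiteN (A i j)
        (p.2 i * p.1 j + z i j - (∑ l, z i l * p.1 l) * p.1 j)
        ∂(Measure.pi fun _ : Fin N => Measure.pi fun _ : Fin n => gaussianReal 0 1)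
      = (∏ i, ∏ j, p.1 j ^ A i j) * ∏ i, (Real.sqrt (Nat.multinomial Finset.univ (A i)) *
          hermiteN (∑ j, A i j) (p.2 i)) := by
    filter_upwards [Measure.quasiMeasurePreserving_fst.ae hu] with p hp
    rw [integral_fintype_prod_eq_prod (fun i (z : Fin n → ℝ) => ∏ j, hermiteN (A i j)
        (p.2 i * p.1 j + z j - (∑ l, z l * p.1 l) * p.1 j))]
    simp only [integral_prod_hermiteN_projection hp, Finset.prod_mul_distrib]
  rw [integral_congr_ae h, integral_prod_mul (fun u : Fin n → ℝ => ∏ i, ∏ j, u j ^ A i j)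
    (fun x : Fin N → ℝ => ∏ i, (Real.sqrt (Nat.multinomial Finset.univ (A i)) *
          hermiteN (∑ j, A i j) (x i))),
    integral_fintype_prod_eq_prod (fun i (x : ℝ) => Real.sqrt (Nat.multinomial Finset.univ (A i)) *
          hermiteN (∑ j, A i j) x)]
  simp only [integral_const_mul]

theorem integrable_prod_pow {N n : ℕ} {μU : Measure (Fin n → ℝ)} [IsProbabilityMeasure μU]
    (hu : ∀ᵐ u ∂μU, ∑ i, u i ^ 2 = 1) (A : Fin N → Fin n → ℕ) :
    Integrable (fun u => ∏ i, ∏ j, u j ^ A i j) μU := by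
  refine Integrable.of_bound (Continuous.aestronglyMeasurable (by fun_prop)) 1 ?_
  filter_upwards [hu] with u hu
  rw [Real.norm_eq_abs, Finset.abs_prod]
  refine Finset.prod_le_one (fun _ _ => abs_nonneg _) fun i _ => ?_
  rw [Finset.abs_prod]
  refine Finset.prod_le_one (fun _ _ => abs_nonneg _) fun j _ => ?_
  rw [abs_pow]
  exact pow_le_one₀ (abs_nonneg _) (abs_le_one_of_sum_sq_eq_one hu j)

theorem sum_piFinset_piAntidiag_eq {N n : ℕ} (α : Fin N → ℕ) (v : Fin n → ℝ) :
    ∑ A ∈ Fintype.piFinset fun i => Finset.piAntidiag (Finset.univ : Finset (Fin n)) (α i),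
      (∏ i, (Nat.multinomial Finset.univ (A i) : ℝ)) * ∏ i, ∏ j, v j ^ A i j
      = (∑ j, v j) ^ ∑ i, α i := by
  rw [← Finset.prod_pow_eq_pow_sum]
  simp only [Finset.sum_pow_eq_sum_piAntidiag, Finset.prod_univ_sum, Finset.prod_mul_distrib]

/-- The `N × n` matrices of natural numbers with row sums `α`. -/
def rowSumIndices {N : ℕ} (n : ℕ) (α : Fin N → ℕ) : Finset (Fin N → Fin n → ℕ) :=
  Fintype.piFinset fun i => Finset.piAntidiag (Finset.univ : Finset (Fin n)) (α i)

theorem mem_rowSumIndices {N n : ℕ} {α : Fin N → ℕ} {A : Fin N → Fin n → ℕ} :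
    A ∈ rowSumIndices n α ↔ ∀ i, ∑ j, A i j = α i := by
  simp [rowSumIndices]

/-- The `N × n` matrices of natural numbers with sum of entries at most `D`. -/
def totalSumIndices (N n D : ℕ) : Finset (Fin N → Fin n → ℕ) :=
  (Finset.range (D + 1)).biUnion fun d =>
    (Finset.Nat.antidiagonalTuple N d).biUnion (rowSumIndices n)

theorem mem_totalSumIndices {N n D : ℕ} {A : Fin N → Fin n → ℕ} :
    A ∈ totalSumIndices N n D ↔ ∑ i, ∑ j, A i j ≤ D := by
  simp only [totalSumIndices, Finset.mem_biUnion, Finset.mem_range, mem_rowSumIndices,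
    Finset.Nat.mem_antidiagonalTuple]
  constructor
  · rintro ⟨d, hd, α, hα, h⟩
    simp only [h, hα]
    omega
  · intro h
    exact ⟨_, Nat.lt_succ_iff.2 h, _, rfl, fun _ => rfl⟩

theorem sum_totalSumIndices {N n D : ℕ} (F : (Fin N → Fin n → ℕ) → ℝ) :
    ∑ A ∈ totalSumIndices N n D, F A = ∑ d ∈ Finset.range (D + 1),
      ∑ α ∈ Finset.Nat.antidiagonalTuple N d, ∑ A ∈ rowSumIndices n α, F A := by
  have hdisj (s : Set (Fin N → ℕ)) : s.PairwiseDisjoint (rowSumIndices n) := by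
    intro α _ β _ hαβ
    refine Finset.disjoint_left.2 fun A hA hB => hαβ (funext fun i => ?_)
    rw [← mem_rowSumIndices.1 hA i, mem_rowSumIndices.1 hB i]
  rw [totalSumIndices, Finset.sum_biUnion]
  · exact Finset.sum_congr rfl fun d _ => Finset.sum_biUnion (hdisj _)
  · intro d _ e _ hde
    refine Finset.disjoint_left.2 fun A hA hB => hde ?_
    simp only [Finset.mem_biUnion, mem_rowSumIndices, Finset.Nat.mem_antidiagonalTuple] at hA hB
    obtain ⟨α, rfl, hα⟩ := hA
    obtain ⟨β, rfl, hβ⟩ := hB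
    exact Finset.sum_congr rfl fun i _ => (hα i).symm.trans (hβ i)

theorem sum_sq_rowSumIndices {N n : ℕ} {μU : Measure (Fin n → ℝ)}
    [IsProbabilityMeasure μU] (hu : ∀ᵐ u ∂μU, ∑ i, u i ^ 2 = 1) (m : ℕ → ℝ) (α : Fin N → ℕ) :
    ∑ A ∈ rowSumIndices n α, ((∫ u, ∏ i, ∏ j, u j ^ A i j ∂μU) *
        ∏ i, Real.sqrt (Nat.multinomial Finset.univ (A i)) * m (∑ j, A i j)) ^ 2
      = (∫ p, (∑ i, p.1 i * p.2 i) ^ (∑ i, α i) ∂(μU.prod μU)) * ∏ i, m (α i) ^ 2 := by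
  have h1 : ∀ A ∈ rowSumIndices n α, ((∫ u, ∏ i, ∏ j, u j ^ A i j ∂μU) *
        ∏ i, Real.sqrt (Nat.multinomial Finset.univ (A i)) * m (∑ j, A i j)) ^ 2
      = (∫ p : (Fin n → ℝ) × (Fin n → ℝ), (∏ i, (Nat.multinomial Finset.univ (A i) : ℝ)) *
          ∏ i, ∏ j, (p.1 j * p.2 j) ^ A i j ∂(μU.prod μU)) * ∏ i, m (α i) ^ 2 := by
    intro A hA
    have h2 := integral_prod_mul (μ := μU) (ν := μU) (fun u : Fin n → ℝ => ∏ i, ∏ j, u j ^ A i j)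
      (fun u : Fin n → ℝ => ∏ i, ∏ j, u j ^ A i j)
    simp only [← Finset.prod_mul_distrib, ← mul_pow] at h2
    rw [integral_const_mul, h2]
    simp only [mem_rowSumIndices.1 hA, mul_pow, Finset.prod_mul_distrib, ← Finset.prod_pow,
      Real.sq_sqrt (Nat.cast_nonneg _)]
    ring
  rw [Finset.sum_congr rfl h1, ← Finset.sum_mul, ← integral_finsetSum]
  · simp only [rowSumIndices, sum_piFinset_piAntidiag_eq]
  · intro A _
    have h3 := (integrable_prod_pow hu A).mul_prod (integrable_prod_pow hu A)
    simp only [← Finset.prod_mul_distrib, ← mul_pow] at h3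
    exact h3.const_mul _

/-- formula for the degree-`D` advantage: let `𝒰` be a distribution on the
unit sphere of `ℝ^n` and `ν` a distribution on `ℝ` with finite first `D` moments. Under
the null `𝒬`, the rows `ỹ_i` of `Ỹ ∈ ℝ^{N×n}` are i.i.d. `N(0, I_n)`; under the planted
`𝒫`, one draws `u ∼ 𝒰` and i.i.d. `x_1, …, x_N ∼ ν` and then independent rows
`ỹ_i ∼ N(x_i u, I_n - uuᵀ)` — realized as `ỹ_i = x_i u + z_i - ⟨z_i, u⟩ u` with
`z_i ∼ N(0, I_n)` i.i.d. Then
`Adv_{≤D}² = ∑_{d=0}^{D} 𝔼[⟨u,u'⟩^d] ∑_{α ∈ ℕ^N, |α| = d} ∏_i (𝔼_ν[h_{α_i}])²`,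
where `Adv_{≤D}` is the supremum of `𝔼_𝒫[f]/√(𝔼_𝒬[f²])` over nonzero polynomials `f` of
degree at most `D` in the `Nn` entries of `Ỹ`, and `u, u' ∼ 𝒰` are independent. -/
theorem stmt_19 (N n D : ℕ) (hN : 1 ≤ N) (hn : 1 ≤ n) (hD : 1 ≤ D)
    (μU : Measure (Fin n → ℝ)) [IsProbabilityMeasure μU]
    (hsphere : μU {u | eucNorm u = 1} = 1)
    (ν : Measure ℝ) [IsProbabilityMeasure ν]
    (hmom : ∀ k : ℕ, k ≤ D → Integrable (fun x : ℝ => |x| ^ k) ν) :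
    (sSup {r : ℝ | ∃ f : MvPolynomial (Fin N × Fin n) ℝ,
        f.totalDegree ≤ D ∧ f ≠ 0 ∧
        r = (∫ Y, MvPolynomial.eval (fun q => Y q.1 q.2) f
              ∂(Measure.map
                (fun w : ((Fin n → ℝ) × (Fin N → ℝ)) × (Fin N → Fin n → ℝ) =>
                  fun i j =>
                    w.1.2 i * w.1.1 j + w.2 i j - (∑ l, w.2 i l * w.1.1 l) * w.1.1 j)
                ((μU.prod (Measure.pi fun _ : Fin N => ν)).prod
                  (Measure.pi fun _ : Fin N =>
                    (Measure.pi fun _ : Fin n => gaussianReal 0 1)))))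
            / Real.sqrt (∫ Y, (MvPolynomial.eval (fun q => Y q.1 q.2) f) ^ 2
              ∂(Measure.pi fun _ : Fin N =>
                  (Measure.pi fun _ : Fin n => gaussianReal 0 1)))}) ^ 2
      = ∑ d ∈ Finset.range (D + 1),
          (∫ p, (∑ i, p.1 i * p.2 i) ^ d ∂(μU.prod μU))
            * ∑ α ∈ Finset.Nat.antidiagonalTuple N d,
                ∏ i, (∫ x, hermiteN (α i) x ∂ν) ^ 2 := by
  have hu := ae_sum_sq_eq_one hsphere
  set P := (μU.prod (Measure.pi fun _ : Fin N => ν)).prod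
    (Measure.pi fun _ : Fin N => (Measure.pi fun _ : Fin n => gaussianReal 0 1))
  set Φ : ((Fin n → ℝ) × (Fin N → ℝ)) × (Fin N → Fin n → ℝ) → Fin N → Fin n → ℝ := fun w i j =>
    w.1.2 i * w.1.1 j + w.2 i j - (∑ l, w.2 i l * w.1.1 l) * w.1.1 j
  have hΦm : Measurable Φ := Continuous.measurable (by fun_prop)
  set T := totalSumIndices N n D
  set m : ℕ → ℝ := fun k => ∫ x, hermiteN k x ∂ν with hm
  set c : (Fin N → Fin n → ℕ) → ℝ := fun A => (∫ u, ∏ i, ∏ j, u j ^ A i j ∂μU) *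
    ∏ i, Real.sqrt (Nat.multinomial Finset.univ (A i)) * m (∑ j, A i j) with hc
  have hcont (f : MvPolynomial (Fin N × Fin n) ℝ) :
      Continuous fun Y : Fin N → Fin n → ℝ => MvPolynomial.eval (fun q => Y q.1 q.2) f :=
    (MvPolynomial.continuous_eval f).comp (by fun_prop)
  have hplanted (g : (Fin N → Fin n → ℕ) → ℝ) :
      ∫ Y, MvPolynomial.eval (fun q => Y q.1 q.2) (∑ A ∈ T, g A • hermiteMatrix A) ∂(P.map Φ)
        = ∑ A ∈ T, g A * c A := by
    rw [integral_map hΦm.aemeasurable (hcont _).aestronglyMeasurable]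
    simp only [map_sum, MvPolynomial.smul_eval, eval_hermiteMatrix]
    rw [integral_finsetSum _ fun A hA => (integrable_prod_hermiteN_planted hu hmom A
      (mem_totalSumIndices.1 hA)).const_mul _]
    refine Finset.sum_congr rfl fun A hA => ?_
    rw [integral_const_mul,
      integral_prod_hermiteN_planted hu hmom A (mem_totalSumIndices.1 hA)]
  have hsum : ∑ A ∈ T, c A ^ 2 = ∑ d ∈ Finset.range (D + 1),
      (∫ p, (∑ i, p.1 i * p.2 i) ^ d ∂(μU.prod μU))
        * ∑ α ∈ Finset.Nat.antidiagonalTuple N d, ∏ i, m (α i) ^ 2 := by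
    rw [sum_totalSumIndices]
    refine Finset.sum_congr rfl fun d _ => ?_
    rw [Finset.mul_sum]
    refine Finset.sum_congr rfl fun α hα => ?_
    rw [sum_sq_rowSumIndices hu, Finset.Nat.mem_antidiagonalTuple.1 hα]
  rw [← hsum]
  refine sq_sSup_eq_sum_sq T c ?_ _ ?_ ?_
  · have h0 : c 0 = 1 := by simp [hc, hm, hermiteN, Nat.multinomial]
    have h1 := Finset.single_le_sum (f := fun A => c A ^ 2) (fun A _ => sq_nonneg _)
      (mem_totalSumIndices.2 (by simp) : (0 : Fin N → Fin n → ℕ) ∈ T)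
    simp only [h0] at h1
    linarith
  · rintro r ⟨f, hf, -, rfl⟩
    obtain ⟨g, rfl⟩ := exists_eq_sum_hermiteMatrix T (fun A => mem_totalSumIndices.2) f hf
    exact ⟨g, by rw [hplanted, integral_sq_sum_hermiteMatrix]⟩
  · intro g hg
    refine ⟨∑ A ∈ T, g A • hermiteMatrix A, ?_, ?_, ?_⟩
    · exact MvPolynomial.totalDegree_finsetSum_le fun A hA =>
        (MvPolynomial.totalDegree_smul_le _ _).trans
          ((totalDegree_hermiteMatrix_le A).trans (mem_totalSumIndices.1 hA))
    · intro h
      rw [← integral_sq_sum_hermiteMatrix, h] at hg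
      simp at hg
    · rw [hplanted, integral_sq_sum_hermiteMatrix]
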